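/- Let ε > 0 and let (v_j)_{j≥1} be a strictly increasing sequence of positive reals with v_{j+1} − v_j ≥ ε for all j (so v_j → ∞). Let V : [0,∞) → ℝ be continuous, E ∈ ℝ, and m := liminf_{x→∞}(V(x) − E) > 0. Let (p_j)_{j≥1} be positive reals. Let ψ : [0,∞) → ℝ be continuous, strictly positive, square-integrable on [0,∞), and on each open interval (0,v₁) and (v_j, v_{j+1}) twice continuously differentiable with −ψ'' + Vψ = Eψ and ψ' < 0 there; at each point v_j the one-sided derivatives exist and satisfy ψ'(v_j⁺) = p_j · ψ'(v_j⁻). Then for every δ with 0 < δ < m, the function x ↦ ( ∏_{j : v_j ≤ x} p_j^{−1/2} ) · exp( ∫_0^x ( max(V(t) − E − δ, 0) )^{1/2} dt ) · ψ(x) is square-integrable and bounded on [0,∞). -/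

import Mathlib

open MeasureTheory Set Filter
open scoped Topology

lemma ag_mono_closure {W : ℝ → ℝ} {a b : ℝ} (hab : a < b) (h : MonotoneOn W (Ioo a b))
    (ha : ∀ η > 0, ∀ c > a, ∃ ξ ∈ Ioo a c, ξ < b ∧ W a - η ≤ W ξ)
    (hb : ∀ η > 0, ∀ c < b, ∃ ξ ∈ Ioo c b, a < ξ ∧ W ξ ≤ W b + η) :
    MonotoneOn W (Icc a b) := by
  have h1 : ∀ x ∈ Ioo a b, W a ≤ W x := by
    intro x hx
    refine le_of_forall_pos_le_add fun η hη => ?_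
    obtain ⟨ξ, hξ, hξb, hW⟩ := ha η hη x hx.1
    have := h ⟨hξ.1, hξb⟩ hx hξ.2.le
    linarith
  have h2 : ∀ x ∈ Ioo a b, W x ≤ W b := by
    intro x hx
    refine le_of_forall_pos_le_add fun η hη => ?_
    obtain ⟨ξ, hξ, hξb, hW⟩ := hb η hη x hx.2
    have := h hx ⟨hξb, hξ.2⟩ hξ.1.le
    linarith
  have h3 : W a ≤ W b := by
    have hm : (a + b) / 2 ∈ Ioo a b := ⟨by linarith, by linarith⟩
    exact (h1 _ hm).trans (h2 _ hm)
  intro x hx y hy hxy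
  rcases eq_or_lt_of_le hx.1 with rfl | hxa
  · rcases eq_or_lt_of_le hxy with rfl | hlt
    · exact le_rfl
    · rcases eq_or_lt_of_le hy.2 with rfl | hyb
      · exact h3
      · exact h1 y ⟨hlt, hyb⟩
  · rcases eq_or_lt_of_le hy.2 with rfl | hyb
    · rcases eq_or_lt_of_le hxy with rfl | hlt
      · exact le_rfl
      · exact h2 x ⟨hxa, hlt⟩
    · exact h ⟨hxa, hxy.trans_lt hyb⟩ ⟨hxa.trans_le hxy, hyb⟩ hxy

lemma ag_right {ψ g : ℝ → ℝ} {a b d : ℝ} (hab : a < b) (hc : ContinuousOn ψ (Icc a b))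
    (hd : DifferentiableOn ℝ ψ (Ioo a b)) (hda : HasDerivWithinAt ψ d (Ici a) a)
    (hg : ContinuousWithinAt g (Ioi a) a) :
    ∀ η > 0, ∀ c > a, ∃ ξ ∈ Ioo a c, ξ < b ∧ |g ξ * deriv ψ ξ - g a * d| < η := by
  have hex : ∀ z, ∃ ξ, z ∈ Ioo a b → ξ ∈ Ioo a z ∧ deriv ψ ξ = slope ψ a z := by
    intro z
    by_cases hz : z ∈ Ioo a b
    · obtain ⟨c, hc1, hc2⟩ := exists_deriv_eq_slope' ψ hz.1
        (hc.mono (Icc_subset_Icc_right hz.2.le)) (hd.mono (Ioo_subset_Ioo_right hz.2.le))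
      exact ⟨c, fun _ => ⟨hc1, hc2⟩⟩
    · exact ⟨0, fun h => absurd h hz⟩
  choose ξ hξ using hex
  have hsl : Tendsto (slope ψ a) (𝓝[>] a) (𝓝 d) := by
    have := hasDerivWithinAt_iff_tendsto_slope.1 hda
    rwa [Ici_sdiff_left] at this
  have hmem : ∀ᶠ z in 𝓝[>] a, z ∈ Ioo a b := Ioo_mem_nhdsGT hab
  have hξt : Tendsto ξ (𝓝[>] a) (𝓝[>] a) := by
    refine tendsto_nhdsWithin_iff.2 ⟨?_, ?_⟩
    · refine tendsto_of_tendsto_of_tendsto_of_le_of_le' tendsto_const_nhds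
        (tendsto_id.mono_right nhdsWithin_le_nhds) ?_ ?_
      · filter_upwards [hmem] with z hz using ((hξ z hz).1.1).le
      · filter_upwards [hmem] with z hz using ((hξ z hz).1.2).le
    · filter_upwards [hmem] with z hz using ((hξ z hz).1.1)
  have hlim : Tendsto (fun z => g (ξ z) * deriv ψ (ξ z)) (𝓝[>] a) (𝓝 (g a * d)) := by
    refine (Tendsto.comp hg hξt).mul (hsl.congr' ?_)
    filter_upwards [hmem] with z hz using ((hξ z hz).2).symm
  intro η hη c hca
  obtain ⟨z, hz1, hz2, hz3⟩ := ((Metric.tendsto_nhds.1 hlim η hη).and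
    (hmem.and (Ioo_mem_nhdsGT hca))).exists
  exact ⟨ξ z, ⟨(hξ z hz2).1.1, (hξ z hz2).1.2.trans hz3.2⟩, (hξ z hz2).1.2.trans hz2.2, hz1⟩

lemma ag_left {ψ g : ℝ → ℝ} {a b d : ℝ} (hab : a < b) (hc : ContinuousOn ψ (Icc a b))
    (hd : DifferentiableOn ℝ ψ (Ioo a b)) (hda : HasDerivWithinAt ψ d (Iic b) b)
    (hg : ContinuousWithinAt g (Iio b) b) :
    ∀ η > 0, ∀ c < b, ∃ ξ ∈ Ioo c b, a < ξ ∧ |g ξ * deriv ψ ξ - g b * d| < η := by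
  have hex : ∀ z, ∃ ξ, z ∈ Ioo a b → ξ ∈ Ioo z b ∧ deriv ψ ξ = slope ψ b z := by
    intro z
    by_cases hz : z ∈ Ioo a b
    · obtain ⟨c, hc1, hc2⟩ := exists_deriv_eq_slope' ψ hz.2
        (hc.mono (Icc_subset_Icc_left hz.1.le)) (hd.mono (Ioo_subset_Ioo_left hz.1.le))
      exact ⟨c, fun _ => ⟨hc1, hc2.trans (slope_comm _ _ _)⟩⟩
    · exact ⟨0, fun h => absurd h hz⟩
  choose ξ hξ using hex
  have hsl : Tendsto (slope ψ b) (𝓝[<] b) (𝓝 d) := by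
    have := hasDerivWithinAt_iff_tendsto_slope.1 hda
    rwa [Iic_sdiff_right] at this
  have hmem : ∀ᶠ z in 𝓝[<] b, z ∈ Ioo a b := Ioo_mem_nhdsLT hab
  have hξt : Tendsto ξ (𝓝[<] b) (𝓝[<] b) := by
    refine tendsto_nhdsWithin_iff.2 ⟨?_, ?_⟩
    · refine tendsto_of_tendsto_of_tendsto_of_le_of_le'
        (tendsto_id.mono_right nhdsWithin_le_nhds) tendsto_const_nhds ?_ ?_
      · filter_upwards [hmem] with z hz using ((hξ z hz).1.1).le
      · filter_upwards [hmem] with z hz using ((hξ z hz).1.2).le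
    · filter_upwards [hmem] with z hz using ((hξ z hz).1.2)
  have hlim : Tendsto (fun z => g (ξ z) * deriv ψ (ξ z)) (𝓝[<] b) (𝓝 (g b * d)) := by
    refine (Tendsto.comp hg hξt).mul (hsl.congr' ?_)
    filter_upwards [hmem] with z hz using ((hξ z hz).2).symm
  intro η hη c hca
  obtain ⟨z, hz1, hz2, hz3⟩ := ((Metric.tendsto_nhds.1 hlim η hη).and
    (hmem.and (Ioo_mem_nhdsLT hca))).exists
  exact ⟨ξ z, ⟨hz3.1.trans (hξ z hz2).1.1, (hξ z hz2).1.2⟩, hz2.1.trans (hξ z hz2).1.1, hz1⟩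

lemma ag_derivs {ψ q κ : ℝ → ℝ} {A δ x U : ℝ} (hq : HasDerivAt q (κ x * q x) x)
    (h1 : HasDerivAt ψ (deriv ψ x) x) (h2 : HasDerivAt (deriv ψ) (U * ψ x) x)
    (hU : U = κ x ^ 2 + δ) :
    HasDerivAt (fun y => A * q y ^ 2 * ψ y * deriv ψ y)
      (A * q x ^ 2 * ((deriv ψ x + κ x * ψ x) ^ 2 + δ * ψ x ^ 2)) x ∧
    HasDerivAt (fun y => A * q y ^ 2 * ψ y ^ 2)
      (2 * (A * q x ^ 2 * (ψ x * (deriv ψ x + κ x * ψ x)))) x := by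
  constructor
  · convert! (((hq.pow 2).const_mul A).mul h1).mul h2 using 1
    subst hU
    simp
    ring
  · convert! ((hq.pow 2).const_mul A).mul (h1.pow 2) using 1
    simp
    ring

lemma ag_mono_of_deriv {f f' : ℝ → ℝ} {a b : ℝ} (h : ∀ x ∈ Ioo a b, HasDerivAt f (f' x) x)
    (h0 : ∀ x ∈ Ioo a b, 0 ≤ f' x) : MonotoneOn f (Ioo a b) := by
  refine monotoneOn_of_deriv_nonneg (convex_Ioo a b)
    (fun x hx => (h x hx).continuousAt.continuousWithinAt) ?_ ?_
  · rw [interior_Ioo]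
    exact fun x hx => (h x hx).differentiableAt.differentiableWithinAt
  · rw [interior_Ioo]
    intro x hx
    rw [(h x hx).deriv]
    exact h0 x hx

/-- Pointwise bound on one edge. -/
lemma ag_edge_bound {f W f' W' : ℝ → ℝ} {a b ε δ M c : ℝ} (hε : 0 < ε) (hab : ε ≤ b - a)
    (hδ : 0 < δ)
    (hf : ∀ x ∈ Ioo a b, HasDerivAt f (f' x) x) (hW : ∀ x ∈ Ioo a b, HasDerivAt W (W' x) x)
    (hWf : ∀ x ∈ Ioo a b, δ * f x ≤ W' x) (h1 : ∀ x ∈ Ioo a b, |f' x| ≤ c * W' x)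
    (hc : 0 ≤ c)
    (hM : ∀ x ∈ Ioo a b, -M ≤ W x) (hM0 : ∀ x ∈ Ioo a b, W x ≤ 0) :
    ∀ x ∈ Ioo a b, f x ≤ 2 * M / (ε * δ) + c * M := by
  intro x hx
  have m1 : MonotoneOn (fun y => c * W y + f y) (Ioo a b) :=
    ag_mono_of_deriv (f' := fun y => c * W' y + f' y)
      (fun y hy => ((hW y hy).const_mul c).add (hf y hy))
      (fun y hy => by have := (abs_le.1 (h1 y hy)).1; linarith)
  have m2 : MonotoneOn (fun y => c * W y - f y) (Ioo a b) :=
    ag_mono_of_deriv (f' := fun y => c * W' y - f' y)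
      (fun y hy => ((hW y hy).const_mul c).sub (hf y hy))
      (fun y hy => by have := (abs_le.1 (h1 y hy)).2; linarith)
  have hsub : Icc (a + ε / 4) (a + 3 * ε / 4) ⊆ Ioo a b := by
    intro y hy
    exact ⟨by linarith [hy.1], by linarith [hy.2]⟩
  obtain ⟨ξ, hξ, hsl⟩ := exists_hasDerivAt_eq_slope W W' (a := a + ε / 4) (b := a + 3 * ε / 4)
    (by linarith) (fun y hy => (hW y (hsub hy)).continuousAt.continuousWithinAt)
    (fun y hy => hW y (hsub (Ioo_subset_Icc_self hy)))
  have hξ' := hsub (Ioo_subset_Icc_self hξ)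
  have hfξ : f ξ ≤ 2 * M / (ε * δ) := by
    have e1 := hWf ξ hξ'
    have e2 := hM (a + ε / 4) (hsub ⟨le_rfl, by linarith⟩)
    have e3 := hM0 (a + 3 * ε / 4) (hsub ⟨by linarith, le_rfl⟩)
    have e4 : a + 3 * ε / 4 - (a + ε / 4) = ε / 2 := by ring
    rw [e4, eq_div_iff (by positivity)] at hsl
    rw [le_div_iff₀ (by positivity)]
    nlinarith
  have a1 := hM x hx
  have a2 := hM0 x hx
  have a3 := hM ξ hξ'
  have a4 := hM0 ξ hξ'
  have b1 : c * W x ≤ 0 := mul_nonpos_of_nonneg_of_nonpos hc a2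
  have b2 : c * W ξ ≤ 0 := mul_nonpos_of_nonneg_of_nonpos hc a4
  have b3 : c * (-M) ≤ c * W x := mul_le_mul_of_nonneg_left a1 hc
  have b4 : c * (-M) ≤ c * W ξ := mul_le_mul_of_nonneg_left a3 hc
  rcases le_total x ξ with h | h
  · have := m1 hx hξ' h
    simp only at this
    linarith
  · have := m2 hξ' hx h
    simp only at this
    linarith

lemma ag_core (ε : ℝ) (hε : 0 < ε) (v : ℕ → ℝ)
    (hvpos : ∀ j, 0 < v j) (hvmono : StrictMono v)
    (hgap : ∀ j, ε ≤ v (j + 1) - v j) (hvt : Tendsto v atTop atTop)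
    (κ q U : ℝ → ℝ) (hq : ∀ x, HasDerivAt q (κ x * q x) x) (hq0 : ∀ x, 0 < q x)
    (P : ℕ → ℝ) (hP : ∀ n, 0 < P n)
    (p : ℕ → ℝ) (hPp : ∀ n, P (n + 1) ^ 2 * p n = P n ^ 2)
    (ψ : ℝ → ℝ) (hψcont : ContinuousOn ψ (Set.Ici 0))
    (hψpos : ∀ x ≥ (0 : ℝ), 0 < ψ x)
    (hψj : ∀ j, ContDiffOn ℝ 2 ψ (Set.Ioo (v j) (v (j + 1))) ∧
      ∀ x ∈ Set.Ioo (v j) (v (j + 1)),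
        deriv (deriv ψ) x = U x * ψ x ∧ deriv ψ x < 0)
    (hjump : ∀ j, ∃ dL dR : ℝ,
      HasDerivWithinAt ψ dL (Set.Iic (v j)) (v j) ∧
      HasDerivWithinAt ψ dR (Set.Ici (v j)) (v j) ∧ dR = p j * dL)
    (δ : ℝ) (hδ : 0 < δ) (k : ℕ) (hk : ∀ x ≥ v k, U x = κ x ^ 2 + δ)
    (N : ℝ → ℕ) (hNmono : Monotone N)
    (hN : ∀ n x, v n ≤ x → x < v (n + 1) → N x = n + 1) :
    IntegrableOn (fun x => (P (N x) * q x * ψ x) ^ 2) (Set.Ici 0) ∧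
    ∃ C : ℝ, ∀ x ≥ (0 : ℝ), |P (N x) * q x * ψ x| ≤ C := by
  have hqc : Continuous q := continuous_iff_continuousAt.2 fun x => (hq x).continuousAt
  have hvk : ∀ n ≥ k, v k ≤ v n := fun n hn => hvmono.monotone hn
  have hcov : ∀ x ≥ v k, ∃ n ≥ k, v n ≤ x ∧ x < v (n + 1) := by
    intro x hx
    have hex : ∃ n, x < v (n + 1) :=
      (((tendsto_add_atTop_iff_nat 1).2 hvt).eventually_gt_atTop x).exists
    classical
    have hs := Nat.find_spec hex
    have hkn : k ≤ Nat.find hex := by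
      by_contra hlt
      push Not at hlt
      have : v (Nat.find hex + 1) ≤ v k := hvmono.monotone hlt
      linarith
    refine ⟨Nat.find hex, hkn, ?_, hs⟩
    rcases Nat.eq_zero_or_pos (Nat.find hex) with h0 | h0
    · have : k = Nat.find hex := by omega
      rw [← this]; exact hx
    · obtain ⟨m, hm⟩ := Nat.exists_eq_succ_of_ne_zero h0.ne'
      have := Nat.find_min hex (m := m) (by omega)
      push Not at this
      rw [hm]; exact this
  -- local derivatives
  have hψ1 : ∀ n, ∀ x ∈ Ioo (v n) (v (n + 1)), HasDerivAt ψ (deriv ψ x) x := by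
    intro n x hx
    exact (((hψj n).1.differentiableOn (by norm_num)).differentiableAt
      (isOpen_Ioo.mem_nhds hx)).hasDerivAt
  have hψ2 : ∀ n, ∀ x ∈ Ioo (v n) (v (n + 1)), HasDerivAt (deriv ψ) (U x * ψ x) x := by
    intro n x hx
    have h1 : ContDiffOn ℝ 1 (deriv ψ) (Ioo (v n) (v (n + 1))) :=
      ((contDiffOn_succ_iff_deriv_of_isOpen (n := 1) isOpen_Ioo).1
        (by simpa [one_add_one_eq_two] using (hψj n).1)).2.2
    have := ((h1.differentiableOn (by norm_num)).differentiableAt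
      (isOpen_Ioo.mem_nhds hx)).hasDerivAt
    rwa [((hψj n).2 x hx).1] at this
  have hder : ∀ n ≥ k, ∀ x ∈ Ioo (v n) (v (n + 1)), _ := fun n hn x hx =>
    ag_derivs (A := P (n + 1) ^ 2) (hq x) (hψ1 n x hx) (hψ2 n x hx)
      (hk x ((hvk n hn).trans hx.1.le))
  set W : ℝ → ℝ := fun x => P (N x) ^ 2 * q x ^ 2 * ψ x * derivWithin ψ (Ici x) x with hWdef
  have hWloc : ∀ n, ∀ x ∈ Ioo (v n) (v (n + 1)),
      W x = P (n + 1) ^ 2 * q x ^ 2 * ψ x * deriv ψ x := by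
    intro n x hx
    simp only [hWdef]
    rw [hN n x hx.1.le hx.2, (hψ1 n x hx).hasDerivWithinAt.derivWithin (uniqueDiffWithinAt_Ici x)]
  have hWder : ∀ n ≥ k, ∀ x ∈ Ioo (v n) (v (n + 1)), HasDerivAt W
      (P (n + 1) ^ 2 * q x ^ 2 * ((deriv ψ x + κ x * ψ x) ^ 2 + δ * ψ x ^ 2)) x := by
    intro n hn x hx
    refine ((hder n hn x hx).1).congr_of_eventuallyEq ?_
    filter_upwards [isOpen_Ioo.mem_nhds hx] with y hy using hWloc n y hy
  have hψat : ∀ x > 0, ContinuousAt ψ x := fun x hx => hψcont.continuousAt (Ici_mem_nhds hx)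
  have hWmono1 : ∀ n ≥ k, MonotoneOn W (Icc (v n) (v (n + 1))) := by
    intro n hn
    have hlt : v n < v (n + 1) := hvmono (Nat.lt_succ_self n)
    obtain ⟨dL, dR, -, hdR, -⟩ := hjump n
    obtain ⟨eL, eR, heL, heR, heq⟩ := hjump (n + 1)
    set g : ℝ → ℝ := fun x => P (n + 1) ^ 2 * q x ^ 2 * ψ x with hg
    have hgc : ∀ x > 0, ContinuousAt g x := fun x hx =>
      (continuousAt_const.mul (hqc.continuousAt.pow 2)).mul (hψat x hx)
    have hcI : ContinuousOn ψ (Icc (v n) (v (n + 1))) :=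
      hψcont.mono fun y hy => (hvpos n).le.trans hy.1
    have hdI : DifferentiableOn ℝ ψ (Ioo (v n) (v (n + 1))) :=
      fun x hx => (hψ1 n x hx).differentiableAt.differentiableWithinAt
    have hWa : W (v n) = g (v n) * dR := by
      simp only [hWdef, hg]
      rw [hN n (v n) le_rfl hlt, hdR.derivWithin (uniqueDiffWithinAt_Ici _)]
    have hWb : W (v (n + 1)) = g (v (n + 1)) * eL := by
      simp only [hWdef, hg]
      rw [hN (n + 1) (v (n + 1)) le_rfl (hvmono (Nat.lt_succ_self _)),
        heR.derivWithin (uniqueDiffWithinAt_Ici _), heq, ← hPp (n + 1)]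
      ring
    refine ag_mono_closure hlt ?_ ?_ ?_
    · refine ag_mono_of_deriv (hWder n hn) fun x hx => ?_
      positivity
    · intro η hη c hc
      obtain ⟨ξ, h1, h2, h3⟩ := ag_right hlt hcI hdI hdR
        (hgc _ (hvpos n)).continuousWithinAt η hη c hc
      refine ⟨ξ, h1, h2, ?_⟩
      rw [hWa, hWloc n ξ ⟨h1.1, h2⟩]
      have := (abs_lt.1 h3).1
      simp only [hg] at this ⊢
      linarith
    · intro η hη c hc
      obtain ⟨ξ, h1, h2, h3⟩ := ag_left hlt hcI hdI heL
        (hgc _ (hvpos (n + 1))).continuousWithinAt η hη c hc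
      refine ⟨ξ, h1, h2, ?_⟩
      rw [hWb, hWloc n ξ ⟨h2, h1.2⟩]
      have := (abs_lt.1 h3).2
      simp only [hg] at this ⊢
      linarith
  have hWmono2 : ∀ n ≥ k, MonotoneOn W (Icc (v k) (v n)) := by
    intro n hn
    induction n, hn using Nat.le_induction with
    | base => simp
    | succ n hn ih =>
      have hlt : v n < v (n + 1) := hvmono (Nat.lt_succ_self n)
      have := ih.union_right (hWmono1 n hn) (c := v n) (isGreatest_Icc (hvk n hn))
        (isLeast_Icc hlt.le)
      rwa [Icc_union_Icc_eq_Icc (hvk n hn) hlt.le] at this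
  have hWmono : MonotoneOn W (Ici (v k)) := by
    intro x hx y hy hxy
    obtain ⟨n, hn, -, h2⟩ := hcov y hy
    exact hWmono2 (n + 1) (by omega) ⟨hx, hxy.trans h2.le⟩ ⟨hy, h2.le⟩ hxy
  have hWneg : ∀ x ≥ v k, W x ≤ 0 := by
    intro x hx
    obtain ⟨n, hn, h1, h2⟩ := hcov x hx
    obtain ⟨y, hy1, hy2⟩ := exists_between h2
    have hy : y ∈ Ioo (v n) (v (n + 1)) := ⟨h1.trans_lt hy1, hy2⟩
    refine (hWmono hx (hx.trans hy1.le) hy1.le).trans ?_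
    rw [hWloc n y hy]
    have hy0 : 0 < ψ y := hψpos y ((hvpos n).le.trans hy.1.le)
    have := ((hψj n).2 y hy).2
    exact mul_nonpos_of_nonneg_of_nonpos (by positivity) this.le
  set M := -W (v k) with hMdef
  have hWM : ∀ x ≥ v k, -M ≤ W x := by
    intro x hx
    rw [hMdef, neg_neg]
    exact hWmono (mem_Ici.2 le_rfl) hx hx
  -- pointwise bounds
  have hb1 : ∀ x ≥ v k, (P (N x) * q x * ψ x) ^ 2 ≤ 2 * M / (ε * δ) + (1 + 1 / δ) * M := by
    intro x hx
    obtain ⟨n, hn, h1, h2⟩ := hcov x hx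
    have hle : ∀ y ∈ Ioo (v n) (v (n + 1)), v k ≤ y := fun y hy => (hvk n hn).trans hy.1.le
    have key : ∀ y ∈ Ioo (v n) (v (n + 1)), P (n + 1) ^ 2 * q y ^ 2 * ψ y ^ 2 ≤
        2 * M / (ε * δ) + (1 + 1 / δ) * M := by
      refine ag_edge_bound (f := fun y => P (n + 1) ^ 2 * q y ^ 2 * ψ y ^ 2) hε (hgap n) hδ
        (fun y hy => (hder n hn y hy).2) (hWder n hn) ?_ ?_ (by positivity)
        (fun y hy => hWM y (hle y hy)) (fun y hy => hWneg y (hle y hy))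
      · intro y hy
        have : 0 ≤ P (n + 1) ^ 2 * q y ^ 2 * (deriv ψ y + κ y * ψ y) ^ 2 := by positivity
        linarith
      · intro y hy
        have hA : 0 ≤ P (n + 1) ^ 2 * q y ^ 2 := by positivity
        generalize deriv ψ y + κ y * ψ y = s
        generalize P (n + 1) ^ 2 * q y ^ 2 = A at hA
        have e : 2 * (A * (ψ y * s)) = A * (2 * (ψ y * s)) := by ring
        have e2 : (1 + 1 / δ) * (A * (s ^ 2 + δ * ψ y ^ 2)) =
          A * (s ^ 2 + ψ y ^ 2 + (s ^ 2 / δ + δ * ψ y ^ 2)) := by field_simp; ring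
        rw [e, e2, abs_mul, abs_of_nonneg hA]
        refine mul_le_mul_of_nonneg_left ?_ hA
        have : 0 ≤ s ^ 2 / δ + δ * ψ y ^ 2 := by positivity
        rw [abs_le]
        constructor <;> nlinarith [sq_nonneg (s - ψ y), sq_nonneg (s + ψ y)]
    have hx0 : 0 < x := (hvpos n).trans_le h1
    have hcont : Tendsto (fun y => P (n + 1) ^ 2 * q y ^ 2 * ψ y ^ 2) (𝓝[>] x)
        (𝓝 (P (n + 1) ^ 2 * q x ^ 2 * ψ x ^ 2)) :=
      ((continuousAt_const.mul (hqc.continuousAt.pow 2)).mul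
        ((hψat x hx0).pow 2)).tendsto.mono_left nhdsWithin_le_nhds
    have := le_of_tendsto hcont (b := 2 * M / (ε * δ) + (1 + 1 / δ) * M) (by
      filter_upwards [Ioo_mem_nhdsGT h2] with y hy using key y ⟨h1.trans_lt hy.1, hy.2⟩)
    rw [hN n x h1 h2]
    calc _ = P (n + 1) ^ 2 * q x ^ 2 * ψ x ^ 2 := by ring
      _ ≤ _ := this
  have hb : ∃ C : ℝ, ∀ x ≥ (0 : ℝ), |P (N x) * q x * ψ x| ≤ C := by
    obtain ⟨B, hB⟩ := (isCompact_Icc (a := (0:ℝ)) (b := v k)).exists_bound_of_continuousOn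
      (f := fun x => q x * ψ x)
      (hqc.continuousOn.mul (hψcont.mono fun y hy => hy.1))
    refine ⟨max ((∑ i ∈ Finset.range (N (v k) + 1), P i) * B)
      (2 * M / (ε * δ) + (1 + 1 / δ) * M + 1), fun x hx => ?_⟩
    rcases le_total x (v k) with h | h
    · refine le_trans ?_ (le_max_left _ _)
      rw [mul_assoc, abs_mul]
      refine mul_le_mul ?_ (hB x ⟨hx, h⟩) (abs_nonneg _) (Finset.sum_nonneg fun i _ => (hP i).le)
      rw [abs_of_pos (hP _)]
      exact Finset.single_le_sum (f := P) (fun i _ => (hP i).le)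
        (Finset.mem_range.2 (Nat.lt_succ_of_le (hNmono h)))
    · refine le_trans ?_ (le_max_right _ _)
      have := hb1 x h
      rw [← sq_abs] at this
      nlinarith [sq_nonneg (|P (N x) * q x * ψ x| - 1), abs_nonneg (P (N x) * q x * ψ x)]
  refine ⟨?_, hb⟩
  obtain ⟨C, hC⟩ := hb
  have hmeas : AEStronglyMeasurable (fun x => (P (N x) * q x * ψ x) ^ 2)
      (volume.restrict (Ici 0)) := by
    have hN' : Measurable N := hNmono.measurable
    have h1 : Measurable fun x => P (N x) := (measurable_from_top (f := P)).comp hN'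
    exact ((h1.aestronglyMeasurable.mul hqc.aestronglyMeasurable).mul
      (hψcont.aestronglyMeasurable measurableSet_Ici)).pow 2
  have hloc : ∀ b, IntegrableOn (fun x => (P (N x) * q x * ψ x) ^ 2) (Icc 0 b) := by
    intro b
    refine ⟨hmeas.mono_set Icc_subset_Ici_self,
      .restrict_of_bounded (C := C ^ 2) measure_Icc_lt_top ?_⟩
    · refine (ae_restrict_iff' measurableSet_Icc).2 (Eventually.of_forall fun x hx => ?_)
      rw [Real.norm_eq_abs, abs_pow]
      exact pow_le_pow_left₀ (abs_nonneg _) (hC x hx.1) 2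
  have hU : Ici (0:ℝ) = Icc 0 (v k) ∪ Ioi (v k) := (Icc_union_Ioi_eq_Ici (hvpos k).le).symm
  rw [hU]
  refine (hloc _).union ?_
  refine integrableOn_Ioi_of_intervalIntegral_norm_bounded (l := atTop) (b := fun x : ℝ => x)
    (M / δ) (v k) (fun b => (hloc b).mono_set fun y hy => ⟨(hvpos k).le.trans hy.1.le, hy.2⟩)
    tendsto_id ?_
  filter_upwards [eventually_ge_atTop (v k)] with b hb
  have hmI : MonotoneOn W (uIcc (v k) b) := by
    rw [uIcc_of_le hb]
    exact hWmono.mono Icc_subset_Ici_self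
  have h1 := hmI.intervalIntegrable_deriv
  have h2 := hmI.intervalIntegral_deriv_mem_uIcc
  rw [uIcc_of_le (sub_nonneg.2 (hWmono (mem_Ici.2 le_rfl) hb hb))] at h2
  have h3 : ∫ x in (v k)..b, ‖(P (N x) * q x * ψ x) ^ 2‖ ≤ ∫ x in (v k)..b, deriv W x / δ := by
    refine intervalIntegral.integral_mono_ae_restrict hb ?_ (h1.div_const δ) ?_
    · rw [intervalIntegrable_iff_integrableOn_Ioc_of_le hb]
      exact ((hloc b).mono_set fun y hy => ⟨(hvpos k).le.trans hy.1.le, hy.2⟩).norm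
    · have hcount : ∀ᵐ x : ℝ, x ∉ range v := (countable_range v).ae_notMem _
      filter_upwards [ae_restrict_mem measurableSet_Icc, ae_restrict_of_ae hcount] with x hx hxv
      obtain ⟨n, hn, e1, e2⟩ := hcov x hx.1
      have hxI : x ∈ Ioo (v n) (v (n + 1)) :=
        ⟨lt_of_le_of_ne e1 fun h => hxv ⟨n, h⟩, e2⟩
      rw [(hWder n hn x hxI).deriv, hN n x e1 e2, le_div_iff₀ hδ, Real.norm_eq_abs,
        abs_of_nonneg (sq_nonneg _)]
      have : 0 ≤ P (n + 1) ^ 2 * q x ^ 2 * (deriv ψ x + κ x * ψ x) ^ 2 := by positivity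
      nlinarith
  refine h3.trans ?_
  rw [intervalIntegral.integral_div]
  refine div_le_div_of_nonneg_right (h2.2.trans ?_) hδ.le
  have := hWneg b hb
  linarith

/-- One-dimensional model of Theorem 1.4 (Agmon path metric bound): an infinite path
with Kirchhoff vertices at positions `v j` is identified with `[0,∞)`; `ψ` is a
positive `L²` eigensolution with `ψ' < 0` between vertices, whose derivative drops by
the factor `p j` at `v j`.  Then for every `δ` with `0 < δ < liminf (V − E)` (the
latter expressed as: there is `m > δ` with `V x − E ≥ m` eventually), the function
`x ↦ (∏_{j : v j ≤ x} (p j)^{−1/2}) · exp(∫_0^x ((V−E−δ)₊)^{1/2}) · ψ(x)` is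
square-integrable and bounded on `[0,∞)`. -/
theorem agmon_path_metric_bound (ε : ℝ) (hε : 0 < ε) (v : ℕ → ℝ)
    (hvpos : ∀ j, 0 < v j) (hvmono : StrictMono v)
    (hgap : ∀ j, ε ≤ v (j + 1) - v j)
    (V : ℝ → ℝ) (hV : ContinuousOn V (Set.Ici 0)) (E : ℝ)
    (p : ℕ → ℝ) (hp : ∀ j, 0 < p j)
    (ψ : ℝ → ℝ) (hψcont : ContinuousOn ψ (Set.Ici 0))
    (hψpos : ∀ x ≥ (0 : ℝ), 0 < ψ x)
    (hψL2 : IntegrableOn (fun x => (ψ x) ^ 2) (Set.Ici 0))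
    (hψ0 : ContDiffOn ℝ 2 ψ (Set.Ioo 0 (v 0)) ∧
      ∀ x ∈ Set.Ioo 0 (v 0),
        -(deriv (deriv ψ) x) + V x * ψ x = E * ψ x ∧ deriv ψ x < 0)
    (hψj : ∀ j, ContDiffOn ℝ 2 ψ (Set.Ioo (v j) (v (j + 1))) ∧
      ∀ x ∈ Set.Ioo (v j) (v (j + 1)),
        -(deriv (deriv ψ) x) + V x * ψ x = E * ψ x ∧ deriv ψ x < 0)
    (hjump : ∀ j, ∃ dL dR : ℝ,
      HasDerivWithinAt ψ dL (Set.Iic (v j)) (v j) ∧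
      HasDerivWithinAt ψ dR (Set.Ici (v j)) (v j) ∧ dR = p j * dL)
    (δ : ℝ) (hδ : 0 < δ)
    (hδliminf : ∃ m, δ < m ∧ ∀ᶠ x in Filter.atTop, m ≤ V x - E) :
    IntegrableOn
      (fun x => ((∏ᶠ (j : ℕ) (_ : v j ≤ x), (p j) ^ (-(1 : ℝ) / 2)) *
        Real.exp (∫ t in (0 : ℝ)..x, Real.sqrt (max (V t - E - δ) 0)) *
        ψ x) ^ 2) (Set.Ici 0) ∧
    ∃ C : ℝ, ∀ x ≥ (0 : ℝ),
      |(∏ᶠ (j : ℕ) (_ : v j ≤ x), (p j) ^ (-(1 : ℝ) / 2)) *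
        Real.exp (∫ t in (0 : ℝ)..x, Real.sqrt (max (V t - E - δ) 0)) *
        ψ x| ≤ C := by
  classical
  have hvt : Tendsto v atTop atTop := by
    have hlin : ∀ n : ℕ, (n : ℝ) * ε ≤ v n := by
      intro n
      induction n with
      | zero => simpa using (hvpos 0).le
      | succ n ih =>
        have := hgap n
        push_cast
        linarith
    exact tendsto_atTop_mono hlin (tendsto_natCast_atTop_atTop.atTop_mul_const hε)
  have hex : ∀ x, ∃ n, x < v n := fun x => (hvt.eventually_gt_atTop x).exists
  set N : ℝ → ℕ := fun x => Nat.find (hex x) with hNdef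
  have hNlt : ∀ x j, v j ≤ x ↔ j < N x := by
    intro x j
    constructor
    · intro h
      by_contra hlt
      push Not at hlt
      have h1 := Nat.find_spec (hex x)
      have h2 : v (N x) ≤ v j := hvmono.monotone hlt
      have h3 : x < v (N x) := h1
      linarith
    · intro h
      have := Nat.find_min (hex x) h
      push Not at this
      exact this
  have hNmono : Monotone N := by
    intro x y hxy
    by_contra hlt
    push Not at hlt
    have h1 := ((hNlt x (N y)).2 hlt).trans hxy
    exact lt_irrefl _ ((hNlt y (N y)).1 h1)
  have hN : ∀ n x, v n ≤ x → x < v (n + 1) → N x = n + 1 := by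
    intro n x h1 h2
    have e1 := (hNlt x n).1 h1
    have e2 : ¬ (n + 1 < N x) := fun h => absurd ((hNlt x (n + 1)).2 h) (not_le.2 h2)
    omega
  set P : ℕ → ℝ := fun n => ∏ i ∈ Finset.range n, (p i) ^ (-(1 : ℝ) / 2) with hPdef
  have hfin : ∀ x, (∏ᶠ (j : ℕ) (_ : v j ≤ x), (p j) ^ (-(1 : ℝ) / 2)) = P (N x) := by
    intro x
    refine finprod_cond_eq_prod_of_cond_iff _ fun {j} _ => ?_
    rw [Finset.mem_range]
    exact hNlt x j
  have hP : ∀ n, 0 < P n := fun n => Finset.prod_pos fun i _ => Real.rpow_pos_of_pos (hp i) _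
  have hPp : ∀ n, P (n + 1) ^ 2 * p n = P n ^ 2 := by
    intro n
    have e : ((p n) ^ (-(1 : ℝ) / 2)) ^ 2 * p n = 1 := by
      rw [← Real.rpow_natCast, ← Real.rpow_mul (hp n).le]
      norm_num
      rw [Real.rpow_neg_one]
      exact inv_mul_cancel₀ (hp n).ne'
    simp only [hPdef]
    rw [Finset.prod_range_succ, mul_pow, mul_assoc, e, mul_one]
  set κ : ℝ → ℝ := fun t => Real.sqrt (max (V (max t 0) - E - δ) 0) with hκ
  have hVc : Continuous fun t : ℝ => V (max t 0) :=
    hV.comp_continuous (by fun_prop) fun t => mem_Ici.2 (le_max_right _ _)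
  have hκc : Continuous κ := by
    simp only [hκ]
    exact (((hVc.sub continuous_const).sub continuous_const).max continuous_const).sqrt
  set q : ℝ → ℝ := fun x => Real.exp (∫ t in (0 : ℝ)..x, κ t) with hqdef
  have hq : ∀ x, HasDerivAt q (κ x * q x) x := by
    intro x
    have := (intervalIntegral.integral_hasDerivAt_right (hκc.intervalIntegrable 0 x)
      (hκc.stronglyMeasurableAtFilter _ _) hκc.continuousAt).exp
    rwa [mul_comm] at this
  have hqeq : ∀ x ≥ (0 : ℝ),
      Real.exp (∫ t in (0 : ℝ)..x, Real.sqrt (max (V t - E - δ) 0)) = q x := by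
    intro x hx
    simp only [hqdef, hκ]
    congr 1
    refine intervalIntegral.integral_congr fun t ht => ?_
    rw [uIcc_of_le hx] at ht
    simp only [max_eq_left ht.1]
  obtain ⟨m, hm, hev⟩ := hδliminf
  obtain ⟨X, hX⟩ := eventually_atTop.1 hev
  obtain ⟨k, hk⟩ := hex X
  have hkey := ag_core ε hε v hvpos hvmono hgap hvt κ q (fun x => V x - E) hq
    (fun x => Real.exp_pos _) P hP p hPp ψ hψcont hψpos
    (fun j => ⟨(hψj j).1, fun x hx => ⟨by
      have := ((hψj j).2 x hx).1
      linarith, ((hψj j).2 x hx).2⟩⟩)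
    hjump δ hδ k (fun x hx => by
      have h1 := hX x (hk.le.trans hx)
      have h2 : 0 ≤ x := (hvpos k).le.trans hx
      simp only [hκ]
      rw [max_eq_left h2, max_eq_left (by linarith), Real.sq_sqrt (by linarith)]
      ring) N hNmono hN
  refine ⟨hkey.1.congr_fun (fun x hx => ?_) measurableSet_Ici, ?_⟩
  · simp only
    rw [hfin, hqeq x hx]
  · obtain ⟨C, hC⟩ := hkey.2
    refine ⟨C, fun x hx => ?_⟩
    rw [hfin, hqeq x hx]
    exact hC x hx
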